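/- Discontinuity example: Let ε be a rational with 0 < ε ≤ 0.1 and let K' = {(B|A)[0.4, 0.5−ε], (C|A)[0.5, 0.6], (B|C)[1,1], (C|B)[1,1]}, where A, B, C are distinct concept names. Then K' is consistent (the interpretation mapping A, B, C to the empty set over any non-empty finite domain is a model), and every model I of K' satisfies A^I = ∅, i.e., [A]^I = 0; consequently every model of K' satisfies (A|⊤)[0,0]. -/

import Mathlib

open scoped Classical

/-- ALC concepts over concept names and role names (both drawn from ℕ,
regarded as disjoint name spaces). -/
inductive Cpt : Type where
  | top : Cpt
  | atom : ℕ → Cpt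
  | neg : Cpt → Cpt
  | inter : Cpt → Cpt → Cpt
  | ex : ℕ → Cpt → Cpt
deriving DecidableEq

/-- A finite interpretation with domain drawn from the type `α`. -/
structure Interp (α : Type) where
  dom : Finset α
  dom_nonempty : dom.Nonempty
  conc : ℕ → Finset α
  conc_sub : ∀ a, conc a ⊆ dom
  role : ℕ → Finset (α × α)
  role_sub : ∀ r, role r ⊆ dom ×ˢ dom

/-- The extension `C^I` of a concept. -/
noncomputable def Interp.ext {α : Type} (I : Interp α) : Cpt → Finset α
  | .top => I.dom
  | .atom a => I.conc a
  | .neg c => I.dom \ I.ext c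
  | .inter c d => I.ext c ∩ I.ext d
  | .ex r c => I.dom.filter (fun d => ∃ e ∈ I.ext c, (d, e) ∈ I.role r)

/-- `[C]^I`, the cardinality of the extension of `C`. -/
noncomputable def cardC {α : Type} (I : Interp α) (c : Cpt) : ℕ := (I.ext c).card

/-- A probabilistic conditional `(C|D)[l,u]`. -/
structure Cond : Type where
  C : Cpt
  D : Cpt
  l : ℚ
  u : ℚ
deriving DecidableEq

/-- `I ⊨ (C|D)[l,u]` iff `[D]^I = 0` or `l ≤ [C ⊓ D]^I/[D]^I ≤ u`. -/
def satCond {α : Type} (I : Interp α) (κ : Cond) : Prop :=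
  cardC I κ.D = 0 ∨
    (κ.l ≤ (cardC I (.inter κ.C κ.D) : ℚ) / (cardC I κ.D : ℚ) ∧
     (cardC I (.inter κ.C κ.D) : ℚ) / (cardC I κ.D : ℚ) ≤ κ.u)

/-- Finite interpretations (with domain drawn from the countable set ℕ). -/
abbrev FInterp := Interp ℕ

/-- The models of a knowledge base (finite set of conditionals). -/
def Models (K : Finset Cond) : Set FInterp := {I | ∀ κ ∈ K, satCond I κ}

/-- l-entailment: every model of `K` satisfies the conditional. -/
def entailsL (K : Finset Cond) (κ : Cond) : Prop := ∀ I ∈ Models K, satCond I κ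

/-- `I` is a model of `K' = {(B|A)[0.4, 0.5−ε], (C|A)[0.5, 0.6], (B|C)[1,1], (C|B)[1,1]}`. -/
def modelK' (a b c : ℕ) (ε : ℚ) (I : FInterp) : Prop :=
  satCond I ⟨.atom b, .atom a, 4/10, 1/2 - ε⟩ ∧
  satCond I ⟨.atom c, .atom a, 1/2, 6/10⟩ ∧
  satCond I ⟨.atom b, .atom c, 1, 1⟩ ∧
  satCond I ⟨.atom c, .atom b, 1, 1⟩

theorem aux_sub {α : Type} (I : Interp α) (b c : ℕ) (h : satCond I ⟨.atom b, .atom c, 1, 1⟩) :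
    I.conc c ⊆ I.conc b := by
  simp only [satCond, cardC, Interp.ext] at h
  rcases h with h | ⟨h, -⟩
  · rw [Finset.card_eq_zero.mp h]; exact Finset.empty_subset _
  · by_cases h0 : (I.conc c).card = 0
    · rw [Finset.card_eq_zero.mp h0]; exact Finset.empty_subset _
    · have hp : (0 : ℚ) < (I.conc c).card := by exact_mod_cast Nat.pos_of_ne_zero h0
      rw [le_div_iff₀ hp, one_mul] at h
      have h' := Nat.cast_le.mp h
      have := Finset.eq_of_subset_of_card_le Finset.inter_subset_right h'
      exact Finset.inter_eq_right.mp this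

theorem aux_card {α : Type} (I : Interp α) (a b c : ℕ) (h : I.conc c ⊆ I.conc b) :
    cardC I (.inter (.atom c) (.atom a)) ≤ cardC I (.inter (.atom b) (.atom a)) := by
  simp only [cardC, Interp.ext]
  exact Finset.card_le_card (Finset.inter_subset_inter_right h)

/-- Discontinuity example: for `0 < ε ≤ 0.1`, the KB `K'` is consistent
(any interpretation mapping `A`, `B`, `C` to `∅` is a model), and every model `I` of
`K'` satisfies `A^I = ∅`, hence satisfies `(A|⊤)[0,0]`. -/
theorem discontinuity_example (a b c : ℕ) (hab : a ≠ b) (hac : a ≠ c) (hbc : b ≠ c)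
    (ε : ℚ) (hε : 0 < ε) (hε1 : ε ≤ 1/10) :
    (∀ I : FInterp, I.conc a = ∅ → I.conc b = ∅ → I.conc c = ∅ → modelK' a b c ε I) ∧
    (∃ I : FInterp, modelK' a b c ε I) ∧
    (∀ I : FInterp, modelK' a b c ε I →
      I.ext (.atom a) = ∅ ∧ cardC I (.atom a) = 0 ∧ satCond I ⟨.atom a, .top, 0, 0⟩) := by
  have h1 : ∀ I : FInterp, I.conc a = ∅ → I.conc b = ∅ → I.conc c = ∅ →
      modelK' a b c ε I := by
    intro I ha hb hc
    refine ⟨Or.inl ?_, Or.inl ?_, Or.inl ?_, Or.inl ?_⟩ <;>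
      simp [cardC, Interp.ext, ha, hb, hc]
  refine ⟨h1, ⟨⟨{0}, by simp, fun _ => ∅, by simp, fun _ => ∅, by simp⟩,
    h1 _ rfl rfl rfl⟩, ?_⟩
  rintro I ⟨hB, hC, hBC, -⟩
  have hsub := aux_sub I b c hBC
  have ha : I.conc a = ∅ := by
    by_contra hne
    have h0 : cardC I (.atom a) ≠ 0 := fun h => hne (Finset.card_eq_zero.mp h)
    have hp : (0 : ℚ) < cardC I (.atom a) := by exact_mod_cast Nat.pos_of_ne_zero h0
    have h2 := (hB.resolve_left h0).2
    have h3 := (hC.resolve_left h0).1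
    have h4 : (cardC I (.inter (.atom c) (.atom a)) : ℚ)
        ≤ cardC I (.inter (.atom b) (.atom a)) := by
      exact_mod_cast aux_card I a b c hsub
    have h5 := div_le_div_of_nonneg_right h4 hp.le
    simp only at h2 h3
    linarith
  refine ⟨by simp [Interp.ext, ha], by simp [cardC, Interp.ext, ha], Or.inr ?_⟩
  simp [cardC, Interp.ext, ha]
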